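/- Equivalence of the two characterizations of reachability (paper's Theorem/Definition 1): a state s_r lies in the reachable set S_r(S₀) if and only if there exist an initial state s₀ ∈ S₀, a stationary stochastic policy π : S → PMF A, and a number of steps n such that the n-step state distribution induced by π from s₀ assigns positive probability to s_r. In other words, 's_r is reachable via some finite action sequence from some s₀ ∈ S₀' holds exactly when 'there exists a policy whose probability of encountering s_r within finitely many steps from some s₀ ∈ S₀ is non-zero'. (For the forward direction the action space A is assumed nonempty so that an arbitrary action sequence can be extended to a policy.) -/

import Mathlib

open scoped ENNReal

/-- State distribution obtained by executing a finite list of actions from a state. -/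
noncomputable def stepDist {S A : Type*} (T : S → A → PMF S) : S → List A → PMF S
  | s, [] => PMF.pure s
  | s, a :: L => (T s a).bind (fun x => stepDist T x L)

/-- `s'` is reachable from `s` if some finite action sequence reaches it with positive probability. -/
def Reachable {S A : Type*} (T : S → A → PMF S) (s s' : S) : Prop :=
  ∃ L : List A, 0 < stepDist T s L s'

/-- The reachable set of a set of initial states. -/
def ReachSet {S A : Type*} (T : S → A → PMF S) (S₀ : Set S) : Set S :=
  { s' | ∃ s₀ ∈ S₀, Reachable T s₀ s' }

/-- One-step state kernel of a stationary stochastic policy. -/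
noncomputable def polKernel {S A : Type*} (T : S → A → PMF S) (π : S → PMF A) (s : S) : PMF S :=
  (π s).bind (fun a => T s a)

/-- `n`-step state distribution induced by a stationary stochastic policy from `s₀`. -/
noncomputable def polDist {S A : Type*} (T : S → A → PMF S) (π : S → PMF A) (s₀ : S) :
    ℕ → PMF S
  | 0 => PMF.pure s₀
  | n + 1 => (polDist T π s₀ n).bind (polKernel T π)

theorem stepDist_snoc {S A : Type*} (T : S → A → PMF S) (a : A) (y z : S) (L : List A) :
    ∀ s, y ∈ (stepDist T s L).support → z ∈ (T y a).support →
      z ∈ (stepDist T s (L ++ [a])).support := by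
  induction L with
  | nil =>
    intro s hy hz
    simp only [stepDist, PMF.support_pure, Set.mem_singleton_iff] at hy
    subst hy
    simp only [List.nil_append, stepDist, PMF.mem_support_bind_iff]
    exact ⟨z, hz, by simp⟩
  | cons b L ih =>
    intro s hy hz
    simp only [stepDist, PMF.mem_support_bind_iff, List.cons_append] at hy ⊢
    obtain ⟨x, hx, hy⟩ := hy
    exact ⟨x, hx, ih x hy hz⟩

theorem polDist_of_stepDist {S A : Type*} (T : S → A → PMF S) (π : S → PMF A) (s₀ z : S)
    (L : List A) (hL : ∀ a ∈ L, ∀ s, a ∈ (π s).support) :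
    ∀ n x, x ∈ (polDist T π s₀ n).support → z ∈ (stepDist T x L).support →
      ∃ m, z ∈ (polDist T π s₀ m).support := by
  induction L with
  | nil =>
    intro n x hx hz
    simp only [stepDist, PMF.support_pure, Set.mem_singleton_iff] at hz
    subst hz
    exact ⟨n, hx⟩
  | cons a L ih =>
    intro n x hx hz
    simp only [stepDist, PMF.mem_support_bind_iff] at hz
    obtain ⟨y, hy, hz⟩ := hz
    refine ih (fun b hb => hL b (List.mem_cons_of_mem _ hb)) (n + 1) y ?_ hz
    simp only [polDist, polKernel, PMF.mem_support_bind_iff]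
    exact ⟨x, hx, a, hL a List.mem_cons_self x, hy⟩

theorem stepDist_of_polDist {S A : Type*} (T : S → A → PMF S) (π : S → PMF A) (s₀ : S)
    (n : ℕ) : ∀ z, z ∈ (polDist T π s₀ n).support →
      ∃ L : List A, z ∈ (stepDist T s₀ L).support := by
  induction n with
  | zero => intro z hz; exact ⟨[], hz⟩
  | succ n ih =>
    intro z hz
    simp only [polDist, polKernel, PMF.mem_support_bind_iff] at hz
    obtain ⟨x, hx, a, -, hz⟩ := hz
    obtain ⟨L, hL⟩ := ih x hx
    exact ⟨L ++ [a], stepDist_snoc T a x z L s₀ hL hz⟩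

/-- Theorem/Definition 1: the two characterizations of the reachable set coincide. -/
theorem mem_reachSet_iff_policy {S A : Type*} [Nonempty A] (T : S → A → PMF S) (S₀ : Set S)
    (s_r : S) :
    s_r ∈ ReachSet T S₀ ↔
      ∃ s₀ ∈ S₀, ∃ π : S → PMF A, ∃ n : ℕ, 0 < polDist T π s₀ n s_r := by
  classical
  constructor
  · rintro ⟨s₀, h₀, L, hL⟩
    obtain ⟨d⟩ := ‹Nonempty A›
    have hne : ((d :: L : List A) : Multiset A) ≠ 0 := by simp
    obtain ⟨m, hm⟩ := polDist_of_stepDist T (fun _ => PMF.ofMultiset _ hne) s₀ s_r L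
      (fun a ha s => by
        rw [PMF.mem_support_ofMultiset_iff]
        simp [ha]) 0 s₀ (by simp [polDist])
      ((PMF.mem_support_iff _ _).2 hL.ne')
    exact ⟨s₀, h₀, _, m, pos_iff_ne_zero.2 ((PMF.mem_support_iff _ _).1 hm)⟩
  · rintro ⟨s₀, h₀, π, n, hn⟩
    obtain ⟨L, hL⟩ := stepDist_of_polDist T π s₀ n s_r ((PMF.mem_support_iff _ _).2 hn.ne')
    exact ⟨s₀, h₀, L, pos_iff_ne_zero.2 ((PMF.mem_support_iff _ _).1 hL)⟩
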